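/- Let T > 0, C > 0, m ≥ 1, let (Ω, 𝒜, μ) be a probability space, and let H be the space of (equivalence classes of) functions [0,T] × Ω → ℝ^m that are square integrable with respect to the product of Lebesgue measure on [0,T] and μ. Set α := C + 4CT and suppose Θ : H → H satisfies: for all Γ¹, Γ² ∈ H and almost every s ∈ [0,T], ∫_Ω e^{αs}|Θ(Γ¹)(s,ω) − Θ(Γ²)(s,ω)|² dμ(ω) ≤ (2C/α) ∫_Ω ∫_s^T e^{αr}|Γ¹(r,ω) − Γ²(r,ω)|² dr dμ(ω). Then, with respect to the norm ‖z‖_α := (∫_0^T ∫_Ω e^{αs}|z(s,ω)|² dμ(ω) ds)^{1/2}, the map Θ is Lipschitz with constant at most 1/√2; in particular Θ admits a unique fixed point in H. -/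

import Mathlib

open MeasureTheory

/-!
Integrating the pointwise estimate over `s ∈ [0, T]`, and bounding each tail integral over
`(s, T]` by the integral over all of `[0, T]`, contracts the squared weighted distance by the factor
`(2C/α)·T = 2CT/(C + 4CT) ≤ 1/2`.

Since the weight is bounded above and away from zero, the weighted distance is comparable to the
`L²` distance. Passing from one to the other costs only a constant, which is absorbed by a
sufficiently high iterate of `Θ`; that iterate is a contraction of the complete space `L²`, and its
fixed point is the fixed point of `Θ`.
-/

theorem iterate_le_pow_mul {X : Type*} {f : X → X} {D : X → X → ℝ} {L : ℝ} (hL : 0 ≤ L)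
    (hf : ∀ x y, D (f x) (f y) ≤ L * D x y) (n : ℕ) (x y : X) :
    D (f^[n] x) (f^[n] y) ≤ L ^ n * D x y := by
  induction n with
  | zero => simp
  | succ n ih =>
    calc D (f^[n + 1] x) (f^[n + 1] y)
        = D (f (f^[n] x)) (f (f^[n] y)) := by simp only [Function.iterate_succ_apply']
      _ ≤ L * D (f^[n] x) (f^[n] y) := hf _ _
      _ ≤ L * (L ^ n * D x y) := by gcongr
      _ = L ^ (n + 1) * D x y := by ring

theorem existsUnique_fixedPoint_of_comparable_dist {X : Type*} [MetricSpace X] [CompleteSpace X]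
    [Nonempty X] {f : X → X} {D : X → X → ℝ} {a b L : ℝ} (ha : 0 < a) (hL₀ : 0 ≤ L) (hL₁ : L < 1)
    (hlower : ∀ x y, a * dist x y ≤ D x y) (hupper : ∀ x y, D x y ≤ b * dist x y)
    (hf : ∀ x y, D (f x) (f y) ≤ L * D x y) : ∃! x, f x = x := by
  have hlim : Filter.Tendsto (fun n : ℕ => L ^ n * b) Filter.atTop (nhds 0) := by
    simpa using (tendsto_pow_atTop_nhds_zero_of_lt_one hL₀ hL₁).mul_const b
  obtain ⟨n, hn⟩ := (hlim.eventually_le_const (show 0 < a * (1 / 2) by positivity)).exists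
  have hdist (x y : X) : dist (f^[n] x) (f^[n] y) ≤ 1 / 2 * dist x y := by
    refine le_of_mul_le_mul_left ?_ ha
    calc a * dist (f^[n] x) (f^[n] y)
        ≤ D (f^[n] x) (f^[n] y) := hlower _ _
      _ ≤ L ^ n * D x y := iterate_le_pow_mul hL₀ hf n x y
      _ ≤ L ^ n * (b * dist x y) := by gcongr; exact hupper x y
      _ = L ^ n * b * dist x y := by ring
      _ ≤ a * (1 / 2) * dist x y := by gcongr
      _ = a * (1 / 2 * dist x y) := by ring
  have hcontr : ContractingWith (1 / 2) f^[n] :=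
    ⟨half_lt_self one_pos, LipschitzWith.of_dist_le_mul fun x y => by simpa using hdist x y⟩
  exact ⟨_, hcontr.isFixedPt_fixedPoint_iterate,
    fun y hy => hcontr.fixedPoint_unique (Function.IsFixedPt.iterate hy n)⟩

section WeightedDist

variable {X E : Type*} [MeasurableSpace X] {ν : Measure X} [NormedAddCommGroup E]

/-- The distance `‖f - g‖_w = (∫ w |f - g|²)^{1/2}` on `L²` with weight `w`, generalizing the norm
`‖·‖_α` of the paper, for which `w (s, ω) = e^{αs}`. -/
noncomputable def weightedDist (w : X → ℝ) (f g : Lp E 2 ν) : ℝ :=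
  √(∫ x, w x * ‖f x - g x‖ ^ 2 ∂ν)

theorem integrable_norm_sub_sq (f g : Lp E 2 ν) : Integrable (fun x => ‖f x - g x‖ ^ 2) ν :=
  ((Lp.memLp f).sub (Lp.memLp g)).integrable_norm_pow two_ne_zero

theorem dist_eq_sqrt_integral_norm_sub_sq (f g : Lp E 2 ν) :
    dist f g = √(∫ x, ‖f x - g x‖ ^ 2 ∂ν) := by
  have hfg : MemLp (f - g : X → E) 2 ν := (Lp.memLp f).sub (Lp.memLp g)
  rw [Lp.dist_def, toReal_eLpNorm hfg.aestronglyMeasurable,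
    lpNorm_eq_integral_norm_rpow_toReal two_ne_zero ENNReal.ofNat_ne_top hfg.aestronglyMeasurable,
    Real.sqrt_eq_rpow]
  simp

variable {w : X → ℝ} {a b : ℝ}

theorem integrable_weight_mul_norm_sub_sq (hw : AEStronglyMeasurable w ν)
    (hwab : ∀ᵐ x ∂ν, w x ∈ Set.Icc a b) (f g : Lp E 2 ν) :
    Integrable (fun x => w x * ‖f x - g x‖ ^ 2) ν :=
  (integrable_norm_sub_sq f g).bdd_mul hw
    (hwab.mono fun _ hx => abs_le_max_abs_abs hx.1 hx.2)

theorem sqrt_mul_dist_le_weightedDist (hw : AEStronglyMeasurable w ν)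
    (hwab : ∀ᵐ x ∂ν, w x ∈ Set.Icc a b) (f g : Lp E 2 ν) :
    √a * dist f g ≤ weightedDist w f g := by
  rw [dist_eq_sqrt_integral_norm_sub_sq, weightedDist,
    ← Real.sqrt_mul' _ (integral_nonneg fun _ => sq_nonneg _), ← integral_const_mul]
  refine Real.sqrt_le_sqrt (integral_mono_ae ((integrable_norm_sub_sq f g).const_mul a)
    (integrable_weight_mul_norm_sub_sq hw hwab f g) ?_)
  filter_upwards [hwab] with x hx
  gcongr
  exact hx.1

theorem weightedDist_le_sqrt_mul_dist (hw : AEStronglyMeasurable w ν)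
    (hwab : ∀ᵐ x ∂ν, w x ∈ Set.Icc a b) (f g : Lp E 2 ν) :
    weightedDist w f g ≤ √b * dist f g := by
  rw [dist_eq_sqrt_integral_norm_sub_sq, weightedDist,
    ← Real.sqrt_mul' _ (integral_nonneg fun _ => sq_nonneg _), ← integral_const_mul]
  refine Real.sqrt_le_sqrt (integral_mono_ae (integrable_weight_mul_norm_sub_sq hw hwab f g)
    ((integrable_norm_sub_sq f g).const_mul b) ?_)
  filter_upwards [hwab] with x hx
  gcongr
  exact hx.2

theorem existsUnique_fixedPoint_of_weightedDist_le [CompleteSpace E] {L : ℝ}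
    {Θ : Lp E 2 ν → Lp E 2 ν} (ha : 0 < a) (hw : AEStronglyMeasurable w ν)
    (hwab : ∀ᵐ x ∂ν, w x ∈ Set.Icc a b) (hL₀ : 0 ≤ L) (hL₁ : L < 1)
    (hΘ : ∀ f g, weightedDist w (Θ f) (Θ g) ≤ L * weightedDist w f g) : ∃! f, Θ f = f :=
  existsUnique_fixedPoint_of_comparable_dist (Real.sqrt_pos.2 ha) hL₀ hL₁
    (sqrt_mul_dist_le_weightedDist hw hwab) (weightedDist_le_sqrt_mul_dist hw hwab) hΘ

end WeightedDist

section Product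

variable {S Ω : Type*} [MeasurableSpace S] [MeasurableSpace Ω] {τ : Measure S} {μ : Measure Ω}
  [SFinite μ]

theorem integral_setIntegral_le_integral_prod [SFinite τ] {v : S × Ω → ℝ}
    (hv : Integrable v (τ.prod μ)) (hv₀ : 0 ≤ v) (A : Set S) :
    ∫ ω, ∫ s in A, v (s, ω) ∂τ ∂μ ≤ ∫ x, v x ∂(τ.prod μ) := by
  rw [integral_prod_symm _ hv]
  refine integral_mono_of_nonneg (ae_of_all _ fun ω => integral_nonneg fun s => hv₀ (s, ω))
    hv.integral_prod_right ?_
  filter_upwards [hv.prod_left_ae] with ω hω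
  exact setIntegral_le_integral hω (ae_of_all _ fun s => hv₀ (s, ω))

theorem integral_prod_le_of_ae_integral_le [IsFiniteMeasure τ] {u v : S × Ω → ℝ} {K : ℝ}
    {A : S → Set S} (hu : Integrable u (τ.prod μ)) (hv : Integrable v (τ.prod μ)) (hv₀ : 0 ≤ v)
    (hK : 0 ≤ K)
    (huv : ∀ᵐ s ∂τ, ∫ ω, u (s, ω) ∂μ ≤ K * ∫ ω, ∫ r in A s, v (r, ω) ∂τ ∂μ) :
    ∫ x, u x ∂(τ.prod μ) ≤ K * τ.real Set.univ * ∫ x, v x ∂(τ.prod μ) := by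
  calc ∫ x, u x ∂(τ.prod μ)
      = ∫ s, ∫ ω, u (s, ω) ∂μ ∂τ := integral_prod u hu
    _ ≤ ∫ _, K * ∫ x, v x ∂(τ.prod μ) ∂τ := by
      refine integral_mono_ae hu.integral_prod_left (integrable_const _) ?_
      filter_upwards [huv] with s hs
      exact hs.trans
        (mul_le_mul_of_nonneg_left (integral_setIntegral_le_integral_prod hv hv₀ (A s)) hK)
    _ = K * τ.real Set.univ * ∫ x, v x ∂(τ.prod μ) := by
      rw [integral_const, smul_eq_mul]
      ring

end Product

theorem exp_mul_mem_Icc {α s T : ℝ} (hs : s ∈ Set.Icc 0 T) :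
    Real.exp (α * s) ∈ Set.Icc (Real.exp (-(|α| * T))) (Real.exp (|α| * T)) := by
  have habs : |α * s| ≤ |α| * T := by
    rw [abs_mul, abs_of_nonneg hs.1]
    exact mul_le_mul_of_nonneg_left hs.2 (abs_nonneg α)
  exact ⟨Real.exp_le_exp.2 (abs_le.1 habs).1, Real.exp_le_exp.2 (abs_le.1 habs).2⟩

section ExpWeight

variable {E Ω : Type*} [NormedAddCommGroup E] [MeasurableSpace Ω] {μ : Measure Ω} {T α : ℝ}

theorem ae_exp_mul_fst_mem_Icc :
    ∀ᵐ x ∂((volume : Measure ℝ).restrict (Set.Icc 0 T)).prod μ,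
      Real.exp (α * x.1) ∈ Set.Icc (Real.exp (-(|α| * T))) (Real.exp (|α| * T)) :=
  Measure.quasiMeasurePreserving_fst.ae
    ((ae_restrict_mem measurableSet_Icc).mono fun _ => exp_mul_mem_Icc)

theorem integrable_exp_mul_norm_sub_sq
    (f g : Lp E 2 (((volume : Measure ℝ).restrict (Set.Icc 0 T)).prod μ)) :
    Integrable (fun x => Real.exp (α * x.1) * ‖f x - g x‖ ^ 2)
      (((volume : Measure ℝ).restrict (Set.Icc 0 T)).prod μ) :=
  integrable_weight_mul_norm_sub_sq (by fun_prop) ae_exp_mul_fst_mem_Icc f g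

theorem weightedDist_exp_eq [SFinite μ]
    (f g : Lp E 2 (((volume : Measure ℝ).restrict (Set.Icc 0 T)).prod μ)) :
    weightedDist (fun x => Real.exp (α * x.1)) f g =
      √(∫ s in Set.Icc (0 : ℝ) T, ∫ ω, Real.exp (α * s) * ‖f (s, ω) - g (s, ω)‖ ^ 2 ∂μ) :=
  congrArg Real.sqrt (integral_prod _ (integrable_exp_mul_norm_sub_sq f g))

theorem weightedDist_exp_le_of_ae_integral_le [SFinite μ] {K L : ℝ}
    {f₁ f₂ g₁ g₂ : Lp E 2 (((volume : Measure ℝ).restrict (Set.Icc 0 T)).prod μ)}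
    (hT : 0 ≤ T) (hK : 0 ≤ K) (hL : 0 ≤ L) (hKL : K * T ≤ L ^ 2)
    (hfg : ∀ᵐ s ∂((volume : Measure ℝ).restrict (Set.Icc 0 T)),
      ∫ ω, Real.exp (α * s) * ‖f₁ (s, ω) - f₂ (s, ω)‖ ^ 2 ∂μ ≤
        K * ∫ ω, (∫ r in Set.Ioc s T,
          Real.exp (α * r) * ‖g₁ (r, ω) - g₂ (r, ω)‖ ^ 2) ∂μ) :
    weightedDist (fun x => Real.exp (α * x.1)) f₁ f₂ ≤
      L * weightedDist (fun x => Real.exp (α * x.1)) g₁ g₂ := by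
  have hnonneg (x : ℝ × Ω) : 0 ≤ Real.exp (α * x.1) * ‖g₁ x - g₂ x‖ ^ 2 := by positivity
  have htail : ∀ᵐ s ∂((volume : Measure ℝ).restrict (Set.Icc 0 T)),
      ∫ ω, Real.exp (α * s) * ‖f₁ (s, ω) - f₂ (s, ω)‖ ^ 2 ∂μ ≤
        K * ∫ ω, (∫ r in Set.Ioc s T, Real.exp (α * r) * ‖g₁ (r, ω) - g₂ (r, ω)‖ ^ 2
          ∂(volume.restrict (Set.Icc 0 T))) ∂μ := by
    filter_upwards [hfg, ae_restrict_mem measurableSet_Icc] with s hs hsT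
    rwa [Measure.restrict_restrict_of_subset
      (Set.Ioc_subset_Icc_self.trans (Set.Icc_subset_Icc_left hsT.1))]
  have hsq := integral_prod_le_of_ae_integral_le (integrable_exp_mul_norm_sub_sq f₁ f₂)
    (integrable_exp_mul_norm_sub_sq g₁ g₂) hnonneg hK htail
  rw [measureReal_restrict_apply_univ, Real.volume_real_Icc_of_le hT, sub_zero] at hsq
  rw [weightedDist, weightedDist, ← Real.sqrt_sq hL, ← Real.sqrt_mul (sq_nonneg L)]
  exact Real.sqrt_le_sqrt
    (hsq.trans (mul_le_mul_of_nonneg_right hKL (integral_nonneg hnonneg)))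

end ExpWeight

theorem contraction_fixed_point_general {E Ω : Type*} [NormedAddCommGroup E] [CompleteSpace E]
    [MeasurableSpace Ω] (μ : Measure Ω) [SFinite μ] {T α K L : ℝ}
    (hT : 0 ≤ T) (hK : 0 ≤ K) (hL₀ : 0 ≤ L) (hL₁ : L < 1) (hKL : K * T ≤ L ^ 2)
    (Θ : Lp E 2 (((volume : Measure ℝ).restrict (Set.Icc 0 T)).prod μ)
      → Lp E 2 (((volume : Measure ℝ).restrict (Set.Icc 0 T)).prod μ))
    (hΘ : ∀ Γ₁ Γ₂, ∀ᵐ s ∂((volume : Measure ℝ).restrict (Set.Icc 0 T)),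
      ∫ ω, Real.exp (α * s) * ‖Θ Γ₁ (s, ω) - Θ Γ₂ (s, ω)‖ ^ 2 ∂μ ≤
        K * ∫ ω, (∫ r in Set.Ioc s T,
          Real.exp (α * r) * ‖Γ₁ (r, ω) - Γ₂ (r, ω)‖ ^ 2) ∂μ) :
    (∀ Γ₁ Γ₂,
      √(∫ s in Set.Icc (0 : ℝ) T,
          (∫ ω, Real.exp (α * s) * ‖Θ Γ₁ (s, ω) - Θ Γ₂ (s, ω)‖ ^ 2 ∂μ)) ≤
        L * √(∫ s in Set.Icc (0 : ℝ) T,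
          (∫ ω, Real.exp (α * s) * ‖Γ₁ (s, ω) - Γ₂ (s, ω)‖ ^ 2 ∂μ))) ∧
    (∃! Γ, Θ Γ = Γ) := by
  have hcontr Γ₁ Γ₂ := weightedDist_exp_le_of_ae_integral_le hT hK hL₀ hKL (hΘ Γ₁ Γ₂)
  refine ⟨fun Γ₁ Γ₂ => ?_, ?_⟩
  · simpa only [weightedDist_exp_eq] using hcontr Γ₁ Γ₂
  · exact existsUnique_fixedPoint_of_weightedDist_le (Real.exp_pos _) (by fun_prop)
      ae_exp_mul_fst_mem_Icc hL₀ hL₁ hcontr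

theorem two_mul_div_mul_le_half {C T : ℝ} (hC : 0 < C) (hT : 0 ≤ T) :
    2 * C / (C + 4 * C * T) * T ≤ 1 / 2 := by
  rw [div_mul_eq_mul_div, div_le_div_iff₀ (by positivity) two_pos]
  linarith

/-- If `Θ` on `H = L²([0,T] × Ω; ℝ^m)` satisfies, for `α = C + 4CT`, the pointwise-in-time
contraction estimate, then `Θ` is `1/√2`-Lipschitz for the weighted norm `‖·‖_α` and admits
a unique fixed point in `H`. -/
theorem contraction_fixed_point {m : ℕ} (hm : 1 ≤ m)
    {Ω : Type*} [MeasurableSpace Ω] (μ : Measure Ω) [IsProbabilityMeasure μ]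
    (T C α : ℝ) (hT : 0 < T) (hC : 0 < C) (hα : α = C + 4 * C * T)
    (Θ : Lp (EuclideanSpace ℝ (Fin m)) 2 (((volume : Measure ℝ).restrict (Set.Icc 0 T)).prod μ)
      → Lp (EuclideanSpace ℝ (Fin m)) 2 (((volume : Measure ℝ).restrict (Set.Icc 0 T)).prod μ))
    (hΘ : ∀ Γ₁ Γ₂, ∀ᵐ s ∂((volume : Measure ℝ).restrict (Set.Icc 0 T)),
      ∫ ω, Real.exp (α * s) * ‖Θ Γ₁ (s, ω) - Θ Γ₂ (s, ω)‖ ^ 2 ∂μ ≤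
        (2 * C / α) * ∫ ω, (∫ r in Set.Ioc s T,
          Real.exp (α * r) * ‖Γ₁ (r, ω) - Γ₂ (r, ω)‖ ^ 2) ∂μ) :
    (∀ Γ₁ Γ₂,
      Real.sqrt (∫ s in Set.Icc (0 : ℝ) T,
          (∫ ω, Real.exp (α * s) * ‖Θ Γ₁ (s, ω) - Θ Γ₂ (s, ω)‖ ^ 2 ∂μ)) ≤
        (1 / Real.sqrt 2) * Real.sqrt (∫ s in Set.Icc (0 : ℝ) T,
          (∫ ω, Real.exp (α * s) * ‖Γ₁ (s, ω) - Γ₂ (s, ω)‖ ^ 2 ∂μ))) ∧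
    (∃! Γ, Θ Γ = Γ) := by
  subst hα
  have hrate : 2 * C / (C + 4 * C * T) * T ≤ (1 / √2) ^ 2 := by
    simpa [div_pow] using two_mul_div_mul_le_half hC hT.le
  have hlt : 1 / √2 < 1 := (div_lt_one (by positivity)).2 Real.one_lt_sqrt_two
  exact contraction_fixed_point_general μ hT.le (by positivity) (by positivity) hlt hrate Θ hΘ
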